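/- For $a=0$, the first four moments of the hard-edge spacing density $A_0(z)=\tfrac14 e^{-z/4}[I_2(\sqrt z)^2-I_1(\sqrt z)I_3(\sqrt z)]$ are $m_1=4e^2[I_0(2)-I_1(2)]$, $m_2=32e^2I_0(2)$, $m_3=384e^2[2I_0(2)+I_1(2)]$, and $m_4=2048e^2[13I_0(2)+9I_1(2)]$, where $m_k=\int_0^\infty z^kA_0(z)\,dz$. -/

import Mathlib

open MeasureTheory

/-- The modified Bessel function of the first kind of integer order. -/
noncomputable def besselI (ν : ℕ) (x : ℝ) : ℝ :=
  ∑' k : ℕ, (x / 2) ^ (2 * k + ν) / ((Nat.factorial k : ℝ) * (Nat.factorial (k + ν) : ℝ))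

/-- The hard-edge spacing density at `a = 0`. -/
noncomputable def A0 (z : ℝ) : ℝ :=
  (1 / 4 : ℝ) * Real.exp (-z / 4) *
    (besselI 2 (Real.sqrt z) ^ 2 - besselI 1 (Real.sqrt z) * besselI 3 (Real.sqrt z))

lemma hs_congr {f g : ℕ → ℝ} {a : ℝ} (h : ∀ n, f n = g n) : HasSum f a ↔ HasSum g a := by
  rw [funext h]

/-- Reduced Bessel coefficients. -/
noncomputable def bq (ν : ℕ) (t : ℝ) (k : ℕ) : ℝ :=
  t ^ k / ((Nat.factorial k : ℝ) * (Nat.factorial (k + ν) : ℝ))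

lemma bq_summable (ν : ℕ) (t : ℝ) : Summable (fun k => ‖bq ν t k‖) := by
  refine Summable.of_nonneg_of_le (fun _ => norm_nonneg _) (fun k => ?_)
    (Real.summable_pow_div_factorial |t|)
  unfold bq
  rw [norm_div, norm_pow, Real.norm_eq_abs]
  have h1 : (1 : ℝ) ≤ (Nat.factorial (k + ν) : ℝ) := by exact_mod_cast Nat.factorial_pos _
  have h0 : (0 : ℝ) < (Nat.factorial k : ℝ) := by positivity
  rw [Real.norm_of_nonneg (by positivity)]
  gcongr
  nlinarith

lemma besselI_sqrt (ν : ℕ) (z : ℝ) (hz : 0 ≤ z) :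
    besselI ν (Real.sqrt z) = (Real.sqrt z / 2) ^ ν * ∑' k, bq ν (z / 4) k := by
  unfold besselI bq
  rw [← tsum_mul_left]
  congr 1
  ext k
  rw [pow_add, pow_mul, div_pow, Real.sq_sqrt hz]
  norm_num
  ring

lemma besselI_two (ν : ℕ) : HasSum (bq ν 1) (besselI ν 2) := by
  have h := (bq_summable ν 1).of_norm.hasSum
  have : besselI ν 2 = ∑' k, bq ν 1 k := by
    unfold besselI bq
    norm_num
  rwa [this]

lemma bq_prod_coeff (μ ν n : ℕ) (t : ℝ) :
    ∑ p ∈ Finset.HasAntidiagonal.antidiagonal n, bq μ t p.1 * bq ν t p.2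
      = t ^ n * (Nat.factorial (2 * n + μ + ν) /
        (Nat.factorial n * Nat.factorial (n + μ + ν) * Nat.factorial (n + μ) * Nat.factorial (n + ν))) := by
  have hv : (((n + ν) + (n + μ)).choose n : ℝ)
      = ∑ p ∈ Finset.HasAntidiagonal.antidiagonal n, ((n + ν).choose p.1 : ℝ) * ((n + μ).choose p.2 : ℝ) := by
    rw [Nat.add_choose_eq]; push_cast; rfl
  have h1 : ((2 * n + μ + ν).factorial : ℝ) / (n.factorial * (n + μ + ν).factorial)
      = (((n + ν) + (n + μ)).choose n : ℝ) := by
    rw [Nat.cast_choose ℝ (by omega)]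
    congr 3
    · ring_nf
    · congr 1; omega
  have h2 : ((2 * n + μ + ν).factorial : ℝ) /
        (n.factorial * (n + μ + ν).factorial * (n + μ).factorial * (n + ν).factorial)
      = (((n + ν) + (n + μ)).choose n : ℝ) / ((n + μ).factorial * (n + ν).factorial) := by
    rw [← h1, div_div]; congr 1; ring
  rw [h2, hv, Finset.sum_div, Finset.mul_sum]
  refine Finset.sum_congr rfl fun p hp => ?_
  obtain ⟨i, j⟩ := p
  simp only [Finset.HasAntidiagonal.mem_antidiagonal] at hp
  subst hp
  simp only [bq]
  rw [Nat.cast_choose ℝ (show i ≤ i + j + ν by omega), Nat.cast_choose ℝ (show j ≤ i + j + μ by omega)]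
  rw [show i + j + ν - i = j + ν by omega, show i + j + μ - j = i + μ by omega]
  have := Nat.factorial_ne_zero (i + j + μ)
  have := Nat.factorial_ne_zero (i + j + ν)
  field_simp
  ring

noncomputable def an (n : ℕ) : ℝ := (Nat.factorial (2 * n + 4) : ℝ) /
  (Nat.factorial n * Nat.factorial (n + 4) * Nat.factorial (n + 2) * Nat.factorial (n + 3))

lemma bq_mul (μ ν : ℕ) (t : ℝ) :
    HasSum (fun n => t ^ n * (Nat.factorial (2 * n + μ + ν) /
        (Nat.factorial n * Nat.factorial (n + μ + ν) * Nat.factorial (n + μ) * Nat.factorial (n + ν))))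
      ((∑' k, bq μ t k) * ∑' k, bq ν t k) := by
  rw [tsum_mul_tsum_eq_tsum_sum_antidiagonal_of_summable_norm (bq_summable μ t) (bq_summable ν t)]
  simp_rw [← bq_prod_coeff]
  exact (summable_norm_sum_mul_antidiagonal_of_summable_norm
    (bq_summable μ t) (bq_summable ν t)).of_norm.hasSum

lemma A0_hasSum (z : ℝ) (hz : 0 ≤ z) :
    HasSum (fun n => (1 / 4 : ℝ) * Real.exp (-z / 4) * ((z / 4) ^ (n + 2) * an n)) (A0 z) := by
  unfold A0
  refine HasSum.mul_left _ ?_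
  have h := ((bq_mul 2 2 (z / 4)).sub (bq_mul 1 3 (z / 4))).mul_left ((z / 4) ^ 2)
  have hs : (Real.sqrt z / 2) ^ 2 = z / 4 := by rw [div_pow, Real.sq_sqrt hz]; norm_num
  convert h using 1
  · ext n
    unfold an
    rw [show 2 * n + 2 + 2 = 2 * n + 4 by ring, show 2 * n + 1 + 3 = 2 * n + 4 by ring,
      show n + 2 + 2 = n + 4 by ring, show n + 1 + 3 = n + 4 by ring]
    have e3 : ((n + 3).factorial : ℝ) = (n + 3) * (n + 2) * (n + 1).factorial := by
      rw [Nat.factorial_succ (n + 2), Nat.factorial_succ (n + 1)]; push_cast; ring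
    have e2 : ((n + 2).factorial : ℝ) = (n + 2) * (n + 1).factorial := by
      rw [Nat.factorial_succ (n + 1)]; push_cast; ring
    rw [e3, e2]
    have : (n : ℝ) + 3 ≠ 0 := by positivity
    have : (n : ℝ) + 2 ≠ 0 := by positivity
    field_simp
    ring
  · rw [besselI_sqrt _ z hz, besselI_sqrt _ z hz, besselI_sqrt _ z hz, ← hs]
    ring

lemma int_gamma (N : ℕ) :
    ∫ z in Set.Ioi (0 : ℝ), z ^ N * Real.exp (-z / 4) = 4 ^ (N + 1) * N.factorial := by
  have h := Real.integral_rpow_mul_exp_neg_mul_Ioi (a := N + 1) (r := 1 / 4) (by positivity) (by norm_num)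
  rw [Real.Gamma_nat_eq_factorial] at h
  have e : (1 / (1 / 4) : ℝ) ^ ((N : ℝ) + 1) = 4 ^ (N + 1) := by
    rw [one_div_one_div]; exact_mod_cast Real.rpow_natCast 4 (N + 1)
  rw [← e, ← h]
  refine setIntegral_congr_fun measurableSet_Ioi fun z hz => ?_
  simp only [add_sub_cancel_right, Real.rpow_natCast]
  congr 2; ring

lemma int_gamma_integrable (N : ℕ) :
    IntegrableOn (fun z : ℝ => z ^ N * Real.exp (-z / 4)) (Set.Ioi 0) := by
  by_contra hc
  have := integral_undef hc
  rw [int_gamma] at this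
  have h2 : (0 : ℝ) < 4 ^ (N + 1) * N.factorial := by positivity
  linarith

lemma moment (k : ℕ) (S : ℝ) (h : HasSum (fun n => an n * (n + k + 2).factorial) S) :
    ∫ z in Set.Ioi (0 : ℝ), z ^ k * A0 z = 4 ^ k * S := by
  let F : ℕ → ℝ → ℝ := fun n z =>
    (an n / 4 ^ (n + 3)) * (z ^ (n + k + 2) * Real.exp (-z / 4))
  have han : ∀ n, 0 ≤ an n := fun n => by unfold an; positivity
  have hF : ∀ n, ∫ z in Set.Ioi (0 : ℝ), F n z = 4 ^ k * (an n * (n + k + 2).factorial) := by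
    intro n
    simp only [F]
    rw [integral_const_mul, int_gamma, show n + k + 2 + 1 = k + (n + 3) by ring, pow_add 4 k (n + 3)]
    have : (4 : ℝ) ^ (n + 3) ≠ 0 := by positivity
    generalize (4 : ℝ) ^ (n + 3) = w at *
    field_simp
  have hN : ∀ n, ∫ z in Set.Ioi (0 : ℝ), ‖F n z‖ = 4 ^ k * (an n * (n + k + 2).factorial) := by
    intro n
    rw [← hF]
    refine setIntegral_congr_fun measurableSet_Ioi fun z hz => ?_
    have hz' : (0 : ℝ) < z := hz
    have := han n
    exact Real.norm_of_nonneg (by simp only [F]; positivity)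
  have key := hasSum_integral_of_summable_integral_norm (μ := volume.restrict (Set.Ioi (0 : ℝ)))
    (F := F) (fun n => (int_gamma_integrable (n + k + 2)).const_mul _)
    (by simp_rw [hN]; exact (h.mul_left _).summable)
  simp_rw [hF] at key
  rw [← (key.unique (h.mul_left _))]
  refine setIntegral_congr_fun measurableSet_Ioi fun z hz => ?_
  have hz' : (0 : ℝ) < z := hz
  have := (A0_hasSum z hz'.le).mul_left (z ^ k)
  show z ^ k * A0 z = ∑' n, F n z
  rw [← this.tsum_eq]
  congr 1
  ext n
  simp only [F]
  rw [div_pow]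
  field_simp
  ring

/-! Touchard type identity -/
open Polynomial in
lemma touchard (ν n : ℕ) :
    ((2 * n).choose (n + ν) : ℝ) = ∑ p ∈ Finset.HasAntidiagonal.antidiagonal n,
      (n.choose p.1 : ℝ) * (2 ^ p.2 *
        (if 2 ∣ p.1 + ν then (p.1.choose ((p.1 + ν) / 2) : ℝ) else 0)) := by
  have e : ((1 + X) ^ (2 * n) : ℝ[X]) = (expand ℝ 2 (1 + X) + C 2 * X) ^ n := by
    rw [pow_mul]
    congr 1
    simp only [map_add, map_one, expand_X, map_ofNat]
    ring
  have := congrArg (fun p => coeff p (n + ν)) e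
  simp only [coeff_one_add_X_pow] at this
  rw [this, (Commute.all _ _).add_pow', finsetSum_coeff]
  refine Finset.sum_congr rfl fun p hp => ?_
  obtain ⟨m, j⟩ := p
  simp only [Finset.HasAntidiagonal.mem_antidiagonal] at hp
  subst hp
  simp only
  rw [coeff_smul, mul_pow, ← map_pow, ← map_pow, nsmul_eq_mul,
    show expand ℝ 2 ((1 + X) ^ m) * (C (2 ^ j) * X ^ j) = C (2 ^ j) * (expand ℝ 2 ((1 + X) ^ m) * X ^ j) by ring,
    coeff_C_mul, show m + j + ν = (m + ν) + j by ring, coeff_mul_X_pow, coeff_expand (by norm_num),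
    coeff_one_add_X_pow]

noncomputable def bm (ν m : ℕ) : ℝ :=
  (if 2 ∣ m + ν then (m.choose ((m + ν) / 2) : ℝ) else 0) / m.factorial

lemma bm_hasSum (ν : ℕ) : HasSum (bm ν) (besselI ν 2) := by
  have hinj : Function.Injective (fun k : ℕ => 2 * k + ν) := fun a b h => by
    simp only at h; omega
  rw [← hinj.hasSum_iff]
  · refine (hs_congr fun k => ?_).mpr (besselI_two ν)
    simp only [Function.comp, bm, bq]
    rw [if_pos (by omega), show (2 * k + ν + ν) / 2 = k + ν by omega,
      Nat.cast_choose ℝ (by omega), show 2 * k + ν - (k + ν) = k by omega]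
    have := Nat.factorial_ne_zero (2 * k + ν)
    field_simp
    simp
  · intro m hm
    simp only [Set.mem_range, not_exists] at hm
    unfold bm
    split_ifs with h
    · rw [Nat.choose_eq_zero_of_lt]
      · simp
      · by_contra hc
        exact hm ((m - ν) / 2) (by omega)
    · simp

/-- `c j ν m` -/
noncomputable def cc (j ν m : ℕ) : ℝ := ((2 * m + 2 * j).choose (m + j + ν) : ℝ) / m.factorial

lemma cc_zero (ν : ℕ) : HasSum (cc 0 ν) (Real.exp 2 * besselI ν 2) := by
  have hb : Summable (fun m => ‖bm ν m‖) := (bm_hasSum ν).summable.norm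
  have he : HasSum (fun j : ℕ => (2 : ℝ) ^ j / j.factorial) (Real.exp 2) := by
    rw [Real.exp_eq_exp_ℝ]; exact NormedSpace.expSeries_div_hasSum_exp (2 : ℝ)
  have hes := he.summable.norm
  have h := (summable_norm_sum_mul_antidiagonal_of_summable_norm hb hes).of_norm.hasSum
  rw [← tsum_mul_tsum_eq_tsum_sum_antidiagonal_of_summable_norm hb hes, he.tsum_eq,
    (bm_hasSum ν).tsum_eq, mul_comm] at h
  refine (hs_congr fun n => ?_).mpr (h)
  unfold cc
  simp only [mul_zero, add_zero]
  rw [touchard, Finset.sum_div]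
  refine Finset.sum_congr rfl fun p hp => ?_
  obtain ⟨m, j⟩ := p
  simp only [Finset.HasAntidiagonal.mem_antidiagonal] at hp
  subst hp
  simp only [bm]
  rw [Nat.cast_choose ℝ (show m ≤ m + j by omega), show m + j - m = j by omega]
  have := Nat.factorial_ne_zero (m + j)
  field_simp

/-- values of the sums -/
noncomputable def GG : ℕ → ℕ → ℝ
  | 0, ν => Real.exp 2 * besselI ν 2
  | j + 1, 0 => 2 * GG j 0 + 2 * GG j 1
  | j + 1, ν + 1 => GG j ν + 2 * GG j (ν + 1) + GG j (ν + 2)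

lemma cc_hasSum : ∀ j ν : ℕ, HasSum (cc j ν) (GG j ν) := by
  intro j
  induction j with
  | zero => intro ν; simpa [GG] using cc_zero ν
  | succ j ih =>
    intro ν
    cases ν with
    | zero =>
      have h := ((ih 0).mul_left 2).add ((ih 1).mul_left 2)
      simp only [GG]
      refine (hs_congr fun m => ?_).mpr (h)
      unfold cc
      rw [show 2 * m + 2 * (j + 1) = (2 * m + 2 * j) + 1 + 1 by ring,
        show m + (j + 1) + 0 = (m + j) + 1 by ring, Nat.choose_succ_succ,
        Nat.choose_succ_succ _ (m + j)]
      rcases Nat.eq_zero_or_pos (m + j) with h0 | h0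
      · have hm : m = 0 := by omega
        have hj : j = 0 := by omega
        subst hm hj
        norm_num
      · obtain ⟨q, hq⟩ : ∃ q, m + j = q + 1 := ⟨m + j - 1, by omega⟩
        have hs : (2 * m + 2 * j).choose q = (2 * m + 2 * j).choose (q + 1 + 1) :=
          Nat.choose_symm_of_eq_add (by omega)
        simp only [add_zero]
        rw [hq, Nat.choose_succ_succ _ q, Nat.succ_eq_add_one, Nat.succ_eq_add_one, hs]
        push_cast
        ring
    | succ ν =>
      have h := ((ih ν).add ((ih (ν + 1)).mul_left 2)).add (ih (ν + 2))
      simp only [GG]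
      refine (hs_congr fun m => ?_).mpr (h)
      unfold cc
      rw [show 2 * m + 2 * (j + 1) = (2 * m + 2 * j) + 1 + 1 by ring,
        show m + (j + 1) + (ν + 1) = (m + j + ν) + 1 + 1 by ring, Nat.choose_succ_succ,
        Nat.choose_succ_succ _ (m + j + ν), Nat.choose_succ_succ _ (m + j + ν + 1)]
      simp only [Nat.succ_eq_add_one, ← add_assoc]
      push_cast
      ring

lemma desc_hasSum (j ν : ℕ) :
    HasSum (fun m => (m.descFactorial j : ℝ) * cc 0 ν m) (GG j ν) := by
  have hinj : Function.Injective (fun m : ℕ => m + j) := add_left_injective j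
  rw [← hinj.hasSum_iff]
  · refine (hs_congr fun m => ?_).mpr (cc_hasSum j ν)
    simp only [Function.comp, cc, mul_zero, add_zero, mul_add]
    have h : (m.factorial : ℝ) * ((m + j).descFactorial j : ℝ) = (m + j).factorial := by
      have := Nat.factorial_mul_descFactorial (show j ≤ m + j by omega)
      rw [show m + j - j = m by omega] at this
      exact_mod_cast this
    have := Nat.factorial_ne_zero (m + j)
    have := Nat.factorial_ne_zero m
    rw [← h] 
    have : ((m + j).descFactorial j : ℝ) ≠ 0 := by
      intro h0; rw [h0, mul_zero] at h; exact absurd h.symm (by positivity)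
    field_simp
  · intro m hm
    simp only [Set.mem_range, not_exists] at hm
    rw [Nat.descFactorial_eq_zero_iff_lt.2]
    · simp
    · by_contra hc
      exact hm (m - j) (by omega)

lemma besselI_rec (ν : ℕ) :
    besselI (ν + 2) 2 = besselI ν 2 - (ν + 1) * besselI (ν + 1) 2 := by
  have h := (besselI_two ν).sub ((besselI_two (ν + 1)).mul_left ((ν : ℝ) + 1))
  refine HasSum.unique ?_ h
  have hinj : Function.Injective (fun m : ℕ => m + 1) := add_left_injective 1
  rw [← hinj.hasSum_iff]
  · refine (hs_congr fun k => ?_).mpr (besselI_two (ν + 2))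
    simp only [Function.comp, bq, one_pow]
    rw [show k + (ν + 2) = (k + ν + 1) + 1 by ring, show k + 1 + (ν + 1) = (k + ν + 1) + 1 by ring,
      show k + 1 + ν = k + ν + 1 by ring, Nat.factorial_succ (k + ν + 1), Nat.factorial_succ k]
    have : (k : ℝ) + ν + 1 + 1 ≠ 0 := by positivity
    have : (k : ℝ) + 1 ≠ 0 := by positivity
    push_cast
    field_simp
    ring
  · intro m hm
    have : m = 0 := by
      by_contra hc
      exact hm ⟨m - 1, by simp only; omega⟩
    subst this
    simp only [bq, zero_add, Nat.factorial_succ ν]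
    push_cast
    have : (ν : ℝ) + 1 ≠ 0 := by positivity
    field_simp
    simp

lemma moment' (k : ℕ) (S : ℝ)
    (h : HasSum (fun m : ℕ => cc 0 2 m * ((m + k).factorial / (m + 1).factorial)) S) :
    ∫ z in Set.Ioi (0 : ℝ), z ^ k * A0 z = 4 ^ k * S := by
  apply moment
  have hinj : Function.Injective (fun m : ℕ => m + 2) := add_left_injective 2
  rw [← hinj.hasSum_iff] at h
  · refine (hs_congr fun n => ?_).mpr (h)
    simp only [Function.comp, an, cc, mul_zero, add_zero]
    rw [Nat.cast_choose ℝ (by omega), show 2 * (n + 2) - (n + 2 + 2) = n by omega,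
      show 2 * (n + 2) = 2 * n + 4 by ring, show n + 2 + k = n + k + 2 by ring,
      show n + 2 + 2 = n + 4 by ring, show n + 2 + 1 = n + 3 by ring]
    field_simp
  · intro m hm
    simp only [Set.mem_range, not_exists] at hm
    have : m < 2 := by
      by_contra hc
      exact hm (m - 2) (by omega)
    unfold cc
    rw [Nat.choose_eq_zero_of_lt (by omega)]
    simp

lemma d1 (m : ℕ) : ((m.descFactorial 1 : ℕ) : ℝ) = m := by simp
lemma d2 (m : ℕ) : ((m.descFactorial 2 : ℕ) : ℝ) = m * (m - 1) := by
  rcases m with _ | m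
  · simp [Nat.descFactorial]
  · simp [Nat.descFactorial]; ring
lemma d3 (m : ℕ) : ((m.descFactorial 3 : ℕ) : ℝ) = m * (m - 1) * (m - 2) := by
  rcases m with _ | _ | m
  · simp [Nat.descFactorial]
  · simp [Nat.descFactorial]
  · simp [Nat.descFactorial]; ring

/-- The first four moments of the hard-edge spacing density `A_0`. -/
theorem hard_edge_a0_moments :
    (∫ z in Set.Ioi (0 : ℝ), z ^ 1 * A0 z)
        = 4 * Real.exp 2 * (besselI 0 2 - besselI 1 2) ∧
    (∫ z in Set.Ioi (0 : ℝ), z ^ 2 * A0 z)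
        = 32 * Real.exp 2 * besselI 0 2 ∧
    (∫ z in Set.Ioi (0 : ℝ), z ^ 3 * A0 z)
        = 384 * Real.exp 2 * (2 * besselI 0 2 + besselI 1 2) ∧
    (∫ z in Set.Ioi (0 : ℝ), z ^ 4 * A0 z)
        = 2048 * Real.exp 2 * (13 * besselI 0 2 + 9 * besselI 1 2) := by
  have r2 := besselI_rec 0
  have r3 := besselI_rec 1
  have r4 := besselI_rec 2
  have r5 := besselI_rec 3
  norm_num at r2 r3 r4 r5
  have s0 := desc_hasSum 0 2
  have s1 := desc_hasSum 1 2
  have s2 := desc_hasSum 2 2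
  have s3 := desc_hasSum 3 2
  simp only [Nat.descFactorial_zero, d1, d2, d3, GG, Nat.cast_one] at s0 s1 s2 s3
  have q : ∀ m : ℕ, ((m + 1).factorial : ℝ) ≠ 0 := fun m => by positivity
  refine ⟨?_, ?_, ?_, ?_⟩
  · rw [moment' 1 _ ((hs_congr fun m => ?_).mpr s0)]
    · rw [r2]; ring
    · rw [div_self (q m)]; ring
  · rw [moment' 2 _ ((hs_congr fun m => ?_).mpr (s1.add (s0.mul_left 2)))]
    · simp only [Nat.reduceAdd, r4, r3, r2]; ring
    · rw [Nat.factorial_succ (m + 1)]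
      have := q m
      push_cast
      field_simp
      ring
  · rw [moment' 3 _ ((hs_congr fun m => ?_).mpr
      ((s2.add (s1.mul_left 6)).add (s0.mul_left 6)))]
    · simp only [Nat.reduceAdd, r4, r3, r2]; ring
    · rw [Nat.factorial_succ (m + 2), Nat.factorial_succ (m + 1)]
      have := q m
      push_cast
      field_simp
      ring
  · rw [moment' 4 _ ((hs_congr fun m => ?_).mpr
      (((s3.add (s2.mul_left 12)).add (s1.mul_left 36)).add (s0.mul_left 24)))]
    · simp only [Nat.reduceAdd, r5, r4, r3, r2]; ring
    · rw [Nat.factorial_succ (m + 3), Nat.factorial_succ (m + 2), Nat.factorial_succ (m + 1)]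
      have := q m
      push_cast
      field_simp
      ring
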